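/- arXiv:math-ph/9809002 — 3 statements merged into one kernel-verified Lean document; each statement's English description precedes it below -/
import Mathlib

section
/- Let Γ be a lattice in ℝⁿ (a discrete cocompact subgroup) with density d (number of lattice points per unit volume, i.e. d = 1/covol(Γ)), and let ω_Γ = Σ_{x∈Γ} δ_x be its Dirac comb. Then the natural autocorrelation of Γ exists: the limit γ_ω = lim_{r→∞} (1/vol(B_r(0))) Σ_{x,y ∈ Γ∩B_r(0)} δ_{x−y} exists in the weak topology of tempered distributions and equals d·ω_Γ. -/
/-!
Grouping the double sum by the difference `z = x - y` turns it into
`∑_{z ∈ Γ} (N_r(z) / vol B_r) φ(z)`, where `N_r(z)` counts the `y ∈ Γ ∩ B_r` with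
`z + y ∈ B_r` (`sum_sum_sub_eq_tsum`). The triangle inequality gives
`#(Γ ∩ B_{r - ‖z‖}) ≤ N_r(z) ≤ #(Γ ∩ B_r)`, and `vol B_{r - c} / vol B_r → 1` for fixed `c`
(`tendsto_volume_ratio`), so every coefficient tends to the density `d`
(`tendsto_pairCount_div`). The coefficients are also bounded uniformly in `z` for large `r`, and a
Schwartz function is absolutely summable over a discrete subgroup (`summable_schwartz`), so
dominated convergence for series lets the limit pass inside the sum over `z`.
-/

open MeasureTheory Filter Topology

section Autocorrelation

variable {n : ℕ} (Γ : AddSubgroup (EuclideanSpace ℝ (Fin n))) [hΓ : DiscreteTopology Γ]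

lemma finite_latticeBall (r : ℝ) : {x : Γ | ‖(x : EuclideanSpace ℝ (Fin n))‖ ≤ r}.Finite := by
  have H : IsClosed (Γ : Set (EuclideanSpace ℝ (Fin n))) := AddSubgroup.isClosed_of_discrete
  refine ((Metric.finite_isBounded_inter_isClosed
    (isDiscrete_iff_discreteTopology.mpr hΓ)
    (Metric.isBounded_closedBall (x := (0 : EuclideanSpace ℝ (Fin n))) (r := r)) H).preimage
    Subtype.val_injective.injOn).subset ?_
  intro x hx
  simpa using hx

/-- The points of `Γ` in the closed ball `B_r(0)`, as a finset of `Γ`. -/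
noncomputable def latticeBall (r : ℝ) : Finset Γ := (finite_latticeBall Γ r).toFinset

@[simp]
lemma mem_latticeBall {r : ℝ} {x : Γ} :
    x ∈ latticeBall Γ r ↔ ‖(x : EuclideanSpace ℝ (Fin n))‖ ≤ r := by
  simp [latticeBall]

lemma ncard_inter_closedBall (r : ℝ) :
    ((Γ : Set (EuclideanSpace ℝ (Fin n))) ∩ Metric.closedBall 0 r).ncard
      = (latticeBall Γ r).card := by
  rw [← Set.ncard_coe_finset, ← Set.ncard_image_of_injective _ Subtype.val_injective]
  congr 1
  ext x
  simp [and_comm]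

lemma tsum_inter_closedBall (r : ℝ) (f : EuclideanSpace ℝ (Fin n) → ℂ) :
    ∑' x : ↥((Γ : Set (EuclideanSpace ℝ (Fin n))) ∩ Metric.closedBall 0 r), f x
      = ∑ x ∈ latticeBall Γ r, f x := by
  rw [tsum_subtype, ← Set.indicator_indicator, ← tsum_subtype (Γ : Set _) ((Metric.closedBall 0 r).indicator f)]
  refine (tsum_eq_sum (s := latticeBall Γ r) ?_).trans ?_
  swap
  · refine Finset.sum_congr rfl fun x hx => ?_
    simp_all
  · intro x hx
    simp_all

open Classical in
/-- The number of ways to write `z ∈ Γ` as a difference `x - y` with `x, y ∈ Γ ∩ B_r(0)`, counted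
by the subtrahend `y`. -/
noncomputable def pairCount (r : ℝ) (z : Γ) : ℕ :=
  ((latticeBall Γ r).filter fun y => z + y ∈ latticeBall Γ r).card

lemma pairCount_le (r : ℝ) (z : Γ) : pairCount Γ r z ≤ (latticeBall Γ r).card :=
  Finset.card_filter_le _ _

lemma le_pairCount (r : ℝ) (z : Γ) :
    (latticeBall Γ (r - ‖(z : EuclideanSpace ℝ (Fin n))‖)).card ≤ pairCount Γ r z := by
  refine Finset.card_le_card fun y hy => ?_
  simp only [mem_latticeBall, Finset.mem_filter, AddSubgroup.coe_add] at hy ⊢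
  have h1 := norm_nonneg (z : EuclideanSpace ℝ (Fin n))
  have h2 := norm_add_le (z : EuclideanSpace ℝ (Fin n)) y
  constructor <;> linarith

/-- The double sum over `Γ ∩ B_r(0)`, grouped by differences. -/
lemma sum_sum_sub_eq_tsum (r : ℝ) (f : EuclideanSpace ℝ (Fin n) → ℂ) :
    ∑ x ∈ latticeBall Γ r, ∑ y ∈ latticeBall Γ r,
        f ((x : EuclideanSpace ℝ (Fin n)) - (y : EuclideanSpace ℝ (Fin n)))
      = ∑' z : Γ, (pairCount Γ r z : ℂ) * f z := by
  classical
  have key (y : Γ) : HasSum (fun z : Γ => if z + y ∈ latticeBall Γ r then f z else 0)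
      (∑ x ∈ latticeBall Γ r,
        f ((x : EuclideanSpace ℝ (Fin n)) - (y : EuclideanSpace ℝ (Fin n)))) := by
    rw [← (Equiv.subRight y).hasSum_iff]
    have := hasSum_sum_of_ne_finset_zero (L := .unconditional Γ) (s := latticeBall Γ r)
      (f := fun x : Γ => if x ∈ latticeBall Γ r then f (x - y : Γ) else 0)
      (fun x hx => if_neg hx)
    convert this using 1
    · ext x
      simp
    · refine Finset.sum_congr rfl fun x hx => ?_
      rw [if_pos hx, AddSubgroup.coe_sub]
  rw [Finset.sum_comm, ← (hasSum_sum fun y _ => key y).tsum_eq]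
  refine tsum_congr fun z => ?_
  rw [← Finset.sum_filter, Finset.sum_const, nsmul_eq_mul, pairCount]


/-- Schwartz decay beats `‖z‖ ^ (-k)` for every `k`, in particular for `k` exceeding the rank. -/
lemma summable_schwartz (φ : SchwartzMap (EuclideanSpace ℝ (Fin n)) ℂ) :
    Summable fun z : Γ => ‖φ z‖ := by
  let L : Submodule ℤ (EuclideanSpace ℝ (Fin n)) := AddSubgroup.toIntSubmodule Γ
  have : DiscreteTopology L := hΓ
  set k := Module.finrank ℤ L + 1 with hk
  obtain ⟨C, -, hC⟩ := φ.decay k 0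
  have hs : Summable fun z : Γ => C * ‖(z : EuclideanSpace ℝ (Fin n))‖⁻¹ ^ k :=
    (ZLattice.summable_norm_pow_inv L k (Nat.lt_succ_self _)).mul_left C
  refine Summable.of_norm_bounded_eventually hs ?_
  -- At `z = 0` the bound degenerates, since `0⁻¹ = 0`.
  refine (Set.finite_singleton (0 : Γ)).subset fun z hz => ?_
  by_contra h0
  apply hz
  have hpos : 0 < ‖(z : EuclideanSpace ℝ (Fin n))‖ := by
    rw [norm_pos_iff]
    simpa using h0
  have := hC z
  rw [norm_iteratedFDeriv_zero] at this
  change ‖‖φ z‖‖ ≤ _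
  rw [norm_norm, inv_pow, ← div_eq_mul_inv, le_div_iff₀ (by positivity), mul_comm]
  exact this

lemma tendsto_volume_ratio (n : ℕ) (c : ℝ) :
    Tendsto (fun r : ℝ =>
      (volume (Metric.closedBall (0 : EuclideanSpace ℝ (Fin n)) (r - c))).toReal /
        (volume (Metric.closedBall (0 : EuclideanSpace ℝ (Fin n)) r)).toReal) atTop (𝓝 1) := by
  have h1 : Tendsto (fun r : ℝ => (1 - c / r) ^ n) atTop (𝓝 1) := by
    have := ((tendsto_const_nhds (x := (1 : ℝ))).sub
      ((tendsto_const_nhds (x := c)).div_atTop tendsto_id)).pow n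
    simpa using this
  refine h1.congr' ?_
  filter_upwards [eventually_gt_atTop 0, eventually_ge_atTop c] with r hr hrc
  have hV : 0 < volume.real (Metric.closedBall (0 : EuclideanSpace ℝ (Fin n)) 1) :=
    ENNReal.toReal_pos (Metric.measure_closedBall_pos _ _ one_pos).ne'
      measure_closedBall_lt_top.ne
  have e (s : ℝ) (hs : 0 ≤ s) :
      (volume (Metric.closedBall (0 : EuclideanSpace ℝ (Fin n)) s)).toReal
        = s ^ n * volume.real (Metric.closedBall (0 : EuclideanSpace ℝ (Fin n)) 1) := by
    have := Measure.addHaar_real_closedBall' volume (0 : EuclideanSpace ℝ (Fin n)) hs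
    rwa [finrank_euclideanSpace_fin] at this
  rw [e r hr.le, e (r - c) (sub_nonneg.2 hrc), mul_div_mul_right _ _ hV.ne', ← div_pow,
    sub_div, div_self hr.ne']

lemma tendsto_pairCount_div {d : ℝ}
    (hd : Tendsto (fun r : ℝ => ((latticeBall Γ r).card : ℝ) /
      (volume (Metric.closedBall (0 : EuclideanSpace ℝ (Fin n)) r)).toReal) atTop (𝓝 d)) (z : Γ) :
    Tendsto (fun r : ℝ => (pairCount Γ r z : ℝ) /
      (volume (Metric.closedBall (0 : EuclideanSpace ℝ (Fin n)) r)).toReal) atTop (𝓝 d) := by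
  set c := ‖(z : EuclideanSpace ℝ (Fin n))‖
  have hshift : Tendsto (fun r : ℝ => r - c) atTop atTop :=
    tendsto_atTop_add_const_right _ _ tendsto_id
  have hlow : Tendsto (fun r : ℝ => ((latticeBall Γ (r - c)).card : ℝ) /
      (volume (Metric.closedBall (0 : EuclideanSpace ℝ (Fin n)) r)).toReal) atTop (𝓝 d) := by
    have h := (hd.comp hshift).mul (tendsto_volume_ratio n c)
    rw [mul_one] at h
    refine h.congr' ?_
    filter_upwards [eventually_gt_atTop c] with r hr
    have hV : 0 < (volume (Metric.closedBall (0 : EuclideanSpace ℝ (Fin n)) (r - c))).toReal :=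
      ENNReal.toReal_pos (Metric.measure_closedBall_pos _ _ (sub_pos.2 hr)).ne'
        measure_closedBall_lt_top.ne
    exact div_mul_div_cancel₀ hV.ne'
  refine tendsto_of_tendsto_of_tendsto_of_le_of_le hlow hd (fun r => ?_) (fun r => ?_)
  · dsimp only
    gcongr
    exact le_pairCount Γ r z
  · dsimp only
    gcongr
    exact pairCount_le Γ r z

end Autocorrelation

/-- For a lattice `Γ` in `ℝⁿ` (a discrete cocompact subgroup) with density `d`
(number of lattice points per unit volume), the natural autocorrelation exists as a weak limit
of tempered distributions and equals `d · ω_Γ`, i.e. for every Schwartz test function `φ`,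
`(1/vol B_r) Σ_{x,y ∈ Γ ∩ B_r} φ(x−y) → d · Σ_{x∈Γ} φ(x)` as `r → ∞`. -/
theorem lattice_natural_autocorrelation_exists
    (n : ℕ) (Γ : AddSubgroup (EuclideanSpace ℝ (Fin n)))
    (hdisc : DiscreteTopology Γ)
    (hcocompact : IsCompact (Set.univ : Set (EuclideanSpace ℝ (Fin n) ⧸ Γ)))
    (d : ℝ)
    (hd : Tendsto
      (fun r : ℝ =>
        (((Γ : Set (EuclideanSpace ℝ (Fin n))) ∩ Metric.closedBall 0 r).ncard : ℝ) /
          (volume (Metric.closedBall (0 : EuclideanSpace ℝ (Fin n)) r)).toReal)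
      atTop (𝓝 d)) :
    ∀ φ : SchwartzMap (EuclideanSpace ℝ (Fin n)) ℂ,
      Tendsto
        (fun r : ℝ =>
          ((1 / (volume (Metric.closedBall (0 : EuclideanSpace ℝ (Fin n)) r)).toReal : ℝ) : ℂ) *
            ∑' x : ↥((Γ : Set (EuclideanSpace ℝ (Fin n))) ∩ Metric.closedBall 0 r),
              ∑' y : ↥((Γ : Set (EuclideanSpace ℝ (Fin n))) ∩ Metric.closedBall 0 r),
                φ ((x : EuclideanSpace ℝ (Fin n)) - (y : EuclideanSpace ℝ (Fin n))))
        atTop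
        (𝓝 ((d : ℂ) * ∑' x : Γ, φ (x : EuclideanSpace ℝ (Fin n)))) := by
  intro φ
  simp only [ncard_inter_closedBall] at hd
  have hsum (r : ℝ) :
      ∑' x : ↥((Γ : Set (EuclideanSpace ℝ (Fin n))) ∩ Metric.closedBall 0 r),
        ∑' y : ↥((Γ : Set (EuclideanSpace ℝ (Fin n))) ∩ Metric.closedBall 0 r),
          φ ((x : EuclideanSpace ℝ (Fin n)) - (y : EuclideanSpace ℝ (Fin n)))
        = ∑' z : Γ, (pairCount Γ r z : ℂ) * φ z := by
    rw [tsum_inter_closedBall Γ r fun x =>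
      ∑' y : ↥((Γ : Set (EuclideanSpace ℝ (Fin n))) ∩ Metric.closedBall 0 r), φ (x - y),
      ← sum_sum_sub_eq_tsum]
    exact Finset.sum_congr rfl fun x _ => tsum_inter_closedBall Γ r fun y => φ (x - y)
  simp only [hsum, ← tsum_mul_left]
  refine tendsto_tsum_of_dominated_convergence (bound := fun z : Γ => (d + 1) * ‖φ z‖)
    ((summable_schwartz Γ φ).mul_left _) (fun z => ?_) ?_
  · have h := ((Complex.continuous_ofReal.tendsto d).comp
      (tendsto_pairCount_div Γ hd z)).mul_const (φ z)
    refine h.congr fun r => ?_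
    simp only [Function.comp_apply]
    push_cast
    ring
  · filter_upwards [hd.eventually_le_const (lt_add_one d)] with r hr z
    have hle : (pairCount Γ r z : ℝ) /
        (volume (Metric.closedBall (0 : EuclideanSpace ℝ (Fin n)) r)).toReal ≤ d + 1 := by
      refine le_trans ?_ hr
      gcongr
      exact pairCount_le Γ r z
    rw [← mul_assoc, norm_mul]
    gcongr
    rw [norm_mul, Complex.norm_real, Complex.norm_natCast, Real.norm_of_nonneg (by positivity),
      one_div_mul_eq_div]
    exact hle
end

section
/- Let p, q ∈ [0,1] and consider the deterministic weighted Dirac comb on ℤ ⊂ ℝ given by ω_a = q·Σ_{x∈ℤ} δ_x + (p−q)·Σ_{x∈2ℤ} δ_x (i.e. weight p at even integers and q at odd integers). Then ω_a has a unique natural autocorrelation γ_{ω_a}, and its Fourier transform is γ̂_{ω_a} = ((p+q)²/4)·Σ_{y∈ℤ} δ_y + ((p−q)²/4)·Σ_{y∈ℤ+1/2} δ_y. -/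
open MeasureTheory Filter Topology
open scoped Classical

/-!
The autocorrelation of the period-two comb is the measure `∑ m, η(m) δ_m`, where `η(m)` is the mean
of `c(x) c(x - m)` over one period. Its values are `(p² + q²)/2` at even `m` and `pq` at odd `m`,
that is `η(m) = (p+q)²/4 + (p-q)²/4 · (-1)^m`.

*Convergence.* Sorting the double sum by the difference `m = x - y` turns it into `∑ m, D_N(m) φ(m)`,
where `N = ⌊r⌋` and `D_N(m)` is the sum of `c(x) c(x - m)` over the `x` with `x` and `x - m` both in
`[-N, N]` (`comb_double_sum`). For fixed `m` the summand is `η(m)` plus a multiple of `(-1)^x`, and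
the latter telescopes, so `D_N(m) = (2N + 1 - |m|) η(m) + O(1)` (`combPairSum_sub_le`). Hence
`D_N(m) / (2r) → η(m)`, and since `|D_N(m)| ≤ 2N + 1` while `φ` is summable on `ℤ`, dominated
convergence gives the limit.

*Fourier transform.* By Poisson summation at `x = 0` and at `x = 1/2`, `∑ φ̂(m) = ∑ φ(m)` and
`∑ (-1)^m φ̂(m) = ∑ φ(m + 1/2)`, which are the two parts of `η`.
-/

/-- The weight of the comb at the integer `x`: `p` at even points and `q` at odd points. -/
noncomputable def combWeight (p q : ℝ) (x : ℤ) : ℝ := if Even x then p else q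

/-- The sign `(-1) ^ m` for an integer `m`, as a real number. -/
noncomputable def intSign (m : ℤ) : ℝ := if Even m then 1 else -1

/-- The autocorrelation coefficient `η(m)`: the mean over `x` of `c(x) c(x - m)`. -/
noncomputable def combCoeff (p q : ℝ) (m : ℤ) : ℝ :=
  (p + q) ^ 2 / 4 + (p - q) ^ 2 / 4 * intSign m

/-- The truncated correlation sum `D_N(m)`, over all pairs `x, x - m` inside `[-N, N]`. -/
noncomputable def combPairSum (p q : ℝ) (N m : ℤ) : ℝ :=
  ∑ x ∈ Finset.Icc (-N) N with x - m ∈ Finset.Icc (-N) N, combWeight p q x * combWeight p q (x - m)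

lemma abs_intSign (m : ℤ) : |intSign m| = 1 := by
  unfold intSign; split_ifs <;> simp

lemma abs_combWeight_le {p q : ℝ} (hp : p ∈ Set.Icc (0 : ℝ) 1) (hq : q ∈ Set.Icc (0 : ℝ) 1)
    (x : ℤ) : |combWeight p q x| ≤ 1 := by
  unfold combWeight
  split_ifs
  · rw [abs_of_nonneg hp.1]; exact hp.2
  · rw [abs_of_nonneg hq.1]; exact hq.2

/-- The summand is its mean plus an oscillating term, the latter written as a difference of
consecutive values of the indicator of the even integers. -/
lemma combWeight_mul (p q : ℝ) (x m : ℤ) :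
    combWeight p q x * combWeight p q (x - m) = combCoeff p q m +
      (p ^ 2 - q ^ 2) / 4 * (1 + intSign m) *
        ((if Even x then (1 : ℝ) else 0) - (if Even (x + 1) then (1 : ℝ) else 0)) := by
  unfold combWeight combCoeff intSign
  simp only [Int.even_add_one, Int.even_sub]
  by_cases hx : Even x <;> by_cases hm : Even m <;>
    simp only [hx, hm, iff_true, iff_false, not_true_eq_false, not_false_eq_true, if_true,
      if_false] <;> ring

lemma combPairSum_eq (p q : ℝ) {N m : ℤ} (h : |m| ≤ 2 * N) :
    combPairSum p q N m = (2 * N + 1 - |m| : ℤ) * combCoeff p q m +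
      (p ^ 2 - q ^ 2) / 4 * (1 + intSign m) *
        ((if Even (max (-N) (m - N)) then (1 : ℝ) else 0)
          - (if Even (min N (N + m) + 1) then (1 : ℝ) else 0)) := by
  have hI : (Finset.Icc (-N) N).filter (fun x => x - m ∈ Finset.Icc (-N) N)
      = Finset.Ico (max (-N) (m - N)) (min N (N + m) + 1) := by
    ext x
    simp only [Finset.mem_filter, Finset.mem_Icc, Finset.mem_Ico]
    omega
  have hle : max (-N) (m - N) ≤ min N (N + m) + 1 := by
    rcases abs_cases m with h' | h' <;> omega
  have hcard : ((Finset.Ico (max (-N) (m - N)) (min N (N + m) + 1)).card : ℤ)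
      = 2 * N + 1 - |m| := by
    rw [Int.card_Ico]
    rcases abs_cases m with h' | h' <;> omega
  have hcard' : ((Finset.Ico (max (-N) (m - N)) (min N (N + m) + 1)).card : ℝ)
      = ((2 * N + 1 - |m| : ℤ) : ℝ) := by exact_mod_cast hcard
  unfold combPairSum
  rw [hI, Finset.sum_congr rfl (fun x _ => combWeight_mul p q x m), Finset.sum_add_distrib,
    Finset.sum_const, nsmul_eq_mul, hcard', ← Finset.mul_sum]
  have htel : ∀ (g : ℤ → ℝ) (a b : ℤ), a ≤ b →
      ∑ x ∈ Finset.Ico a b, (g x - g (x + 1)) = g a - g b := by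
    intro g a b hab
    induction b, hab using Int.leInduction with
    | base => simp
    | succ b hb ih =>
      have : Finset.Ico a (b + 1) = insert b (Finset.Ico a b) := by
        ext x; simp only [Finset.mem_Ico, Finset.mem_insert]; omega
      rw [this, Finset.sum_insert (by simp), ih]; ring
  rw [htel (fun x => if Even x then (1 : ℝ) else 0) _ _ hle]

/-- For a fixed difference `m`, the truncated sum differs from `2 r η(m)` by a bounded amount. -/
lemma combPairSum_sub_le (p q : ℝ) (m : ℤ) : ∃ K : ℝ, ∀ r : ℝ, |(m : ℝ)| ≤ r →
    |combPairSum p q ⌊r⌋ m - 2 * r * combCoeff p q m| ≤ K := by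
  refine ⟨(|(m : ℝ)| + 3) * |combCoeff p q m| + |(p ^ 2 - q ^ 2) / 4 * (1 + intSign m)|, ?_⟩
  intro r hr
  have h1 : |m| ≤ ⌊r⌋ := by
    rw [Int.le_floor]; push_cast; exact hr
  have hle := Int.floor_le r
  have hlt := Int.lt_floor_add_one r
  have h0 := abs_nonneg m
  have h0' := abs_nonneg (m : ℝ)
  rw [combPairSum_eq p q (by omega)]
  set e : ℝ := (if Even (max (-⌊r⌋) (m - ⌊r⌋)) then (1 : ℝ) else 0)
          - (if Even (min ⌊r⌋ (⌊r⌋ + m) + 1) then (1 : ℝ) else 0) with he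
  have hE : |e| ≤ 1 := by
    rw [he]; split_ifs <;> simp
  have hA : |2 * (⌊r⌋ : ℝ) + 1 - |(m : ℝ)| - 2 * r| ≤ |(m : ℝ)| + 3 := by
    rw [abs_le]; constructor <;> linarith
  push_cast
  calc _ = |(2 * (⌊r⌋ : ℝ) + 1 - |(m : ℝ)| - 2 * r) * combCoeff p q m
        + (p ^ 2 - q ^ 2) / 4 * (1 + intSign m) * e| := by congr 1; ring
    _ ≤ |2 * (⌊r⌋ : ℝ) + 1 - |(m : ℝ)| - 2 * r| * |combCoeff p q m|
        + |(p ^ 2 - q ^ 2) / 4 * (1 + intSign m)| * |e| := by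
      rw [← abs_mul, ← abs_mul]; exact abs_add_le _ _
    _ ≤ _ := by
      gcongr
      exact mul_le_of_le_one_right (abs_nonneg _) hE

lemma tendsto_combPairSum (p q : ℝ) (m : ℤ) :
    Tendsto (fun r : ℝ => 1 / (2 * r) * combPairSum p q ⌊r⌋ m) atTop (𝓝 (combCoeff p q m)) := by
  obtain ⟨K, hK⟩ := combPairSum_sub_le p q m
  rw [tendsto_iff_norm_sub_tendsto_zero]
  have hlim : Tendsto (fun r : ℝ => K / (2 * r)) atTop (𝓝 0) :=
    tendsto_const_nhds.div_atTop (tendsto_id.const_mul_atTop two_pos)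
  refine squeeze_zero' (Eventually.of_forall fun _ => norm_nonneg _) ?_ hlim
  filter_upwards [eventually_ge_atTop |(m : ℝ)|, eventually_gt_atTop 0] with r hr hr0
  have : 1 / (2 * r) * combPairSum p q ⌊r⌋ m - combCoeff p q m
      = (combPairSum p q ⌊r⌋ m - 2 * r * combCoeff p q m) / (2 * r) := by
    field_simp
  rw [this, Real.norm_eq_abs, abs_div, abs_of_pos (show 0 < 2 * r by linarith)]
  gcongr
  exact hK r hr

lemma abs_combPairSum_le {p q : ℝ} (hp : p ∈ Set.Icc (0 : ℝ) 1) (hq : q ∈ Set.Icc (0 : ℝ) 1)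
    {r : ℝ} (hr : 1 ≤ r) (m : ℤ) : |1 / (2 * r) * combPairSum p q ⌊r⌋ m| ≤ 2 := by
  have hf : 0 ≤ ⌊r⌋ := Int.floor_nonneg.2 (by linarith)
  have hle := Int.floor_le r
  have h1 : |combPairSum p q ⌊r⌋ m| ≤ 2 * ⌊r⌋ + 1 := by
    unfold combPairSum
    calc _ ≤ ∑ x ∈ Finset.Icc (-⌊r⌋) ⌊r⌋ with x - m ∈ Finset.Icc (-⌊r⌋) ⌊r⌋,
          |combWeight p q x * combWeight p q (x - m)| := Finset.abs_sum_le_sum_abs _ _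
      _ ≤ ∑ x ∈ Finset.Icc (-⌊r⌋) ⌊r⌋ with x - m ∈ Finset.Icc (-⌊r⌋) ⌊r⌋, (1 : ℝ) := by
        refine Finset.sum_le_sum fun x _ => ?_
        rw [abs_mul]
        exact mul_le_one₀ (abs_combWeight_le hp hq _) (abs_nonneg _) (abs_combWeight_le hp hq _)
      _ ≤ ∑ x ∈ Finset.Icc (-⌊r⌋) ⌊r⌋, (1 : ℝ) :=
        Finset.sum_le_sum_of_subset_of_nonneg (Finset.filter_subset _ _) (by simp)
      _ = 2 * ⌊r⌋ + 1 := by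
        have : ((Finset.Icc (-⌊r⌋) ⌊r⌋).card : ℤ) = 2 * ⌊r⌋ + 1 := by
          rw [Int.card_Icc]; omega
        rw [Finset.sum_const, nsmul_eq_mul, mul_one]
        exact_mod_cast this
  rw [abs_mul, abs_of_pos (show 0 < 1 / (2 * r) by positivity), one_div_mul_eq_div,
    div_le_iff₀ (by linarith)]
  linarith

/-- The double sum sorted by the difference `m = x - y`. -/
lemma comb_double_sum (p q : ℝ) (N : ℤ) (f : ℤ → ℂ) :
    ∑ x ∈ Finset.Icc (-N) N, ∑ y ∈ Finset.Icc (-N) N,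
      ((combWeight p q x * combWeight p q y : ℝ) : ℂ) * f (x - y)
      = ∑' m : ℤ, (combPairSum p q N m : ℂ) * f m := by
  set I := Finset.Icc (-N) N
  let F : ℤ → ℤ → ℂ := fun x m =>
    if x - m ∈ I then ((combWeight p q x * combWeight p q (x - m) : ℝ) : ℂ) * f m else 0
  have hx : ∀ x : ℤ, HasSum (F x)
      (∑ y ∈ I, ((combWeight p q x * combWeight p q y : ℝ) : ℂ) * f (x - y)) := by
    intro x
    rw [← (Equiv.subLeft x).hasSum_iff]
    have h : HasSum (F x ∘ Equiv.subLeft x) (∑ y ∈ I, (F x ∘ Equiv.subLeft x) y) :=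
      hasSum_sum_of_ne_finset_zero fun y hy => by simp [F, hy]
    convert h using 1
    refine Finset.sum_congr rfl fun y hy => ?_
    simp [F, hy]
  have hsum := hasSum_sum (s := I) fun x _ => hx x
  rw [← hsum.tsum_eq]
  refine tsum_congr fun m => ?_
  simp only [F, combPairSum]
  rw [← Finset.sum_filter, Complex.ofReal_sum, Finset.sum_mul]

/-- The weights `(1 + |m|)⁻²`, summable over `ℤ`, dominate a Schwartz function on `ℤ` with a
constant given by its seminorms. -/
lemma norm_schwartz_int_le (φ : SchwartzMap ℝ ℂ) (m : ℤ) :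
    ‖φ m‖ ≤ ((1 + |(m : ℝ)|) ^ 2)⁻¹ *
      (4 * (Finset.Iic (2, 0)).sup (schwartzSeminormFamily ℂ ℝ ℂ) φ) := by
  have h := SchwartzMap.one_add_le_sup_seminorm_apply (𝕜 := ℂ) (m := (2, 0)) le_rfl le_rfl φ (m : ℝ)
  rw [norm_iteratedFDeriv_zero, Real.norm_eq_abs] at h
  rw [inv_mul_eq_div, le_div_iff₀ (by positivity), mul_comm]
  refine h.trans (le_of_eq ?_)
  norm_num
  rfl

lemma summable_inv_one_add_sq : Summable fun m : ℤ => ((1 + |(m : ℝ)|) ^ 2)⁻¹ := by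
  have h := (Real.summable_one_div_int_pow (p := 2)).2 one_lt_two
  refine Summable.of_norm_bounded_eventually h ?_
  rw [Filter.eventually_cofinite]
  refine (Set.finite_singleton (0 : ℤ)).subset fun m hm => ?_
  by_contra h0
  apply hm
  have h0' : (m : ℝ) ≠ 0 := by exact_mod_cast h0
  have : 0 < |(m : ℝ)| := abs_pos.2 h0'
  rw [Real.norm_of_nonneg (by positivity), one_div, ← sq_abs (m : ℝ)]
  gcongr
  linarith

lemma summable_norm_schwartz_int (φ : SchwartzMap ℝ ℂ) : Summable fun m : ℤ => ‖φ m‖ :=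
  (summable_inv_one_add_sq.mul_right _).of_nonneg_of_le (fun _ => norm_nonneg _)
    (norm_schwartz_int_le φ)

lemma abs_combCoeff_le (p q : ℝ) (m : ℤ) :
    |combCoeff p q m| ≤ (p + q) ^ 2 / 4 + (p - q) ^ 2 / 4 := by
  unfold combCoeff
  refine (abs_add_le _ _).trans ?_
  rw [abs_mul, abs_intSign, mul_one, abs_of_nonneg (by positivity : 0 ≤ (p + q) ^ 2 / 4),
    abs_of_nonneg (by positivity : 0 ≤ (p - q) ^ 2 / 4)]

lemma summable_mul_schwartz_int {a : ℤ → ℝ} {C : ℝ} (ha : ∀ m, |a m| ≤ C)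
    (φ : SchwartzMap ℝ ℂ) : Summable fun m : ℤ => (a m : ℂ) * φ m := by
  refine Summable.of_norm_bounded ((summable_norm_schwartz_int φ).mul_left C) fun m => ?_
  rw [norm_mul, Complex.norm_real, Real.norm_eq_abs]
  exact mul_le_mul_of_nonneg_right (ha m) (norm_nonneg _)

/-- The autocorrelation `∑ m, η(m) δ_m` of the comb, as a tempered distribution. -/
noncomputable def combAutocorrelation (p q : ℝ) : SchwartzMap ℝ ℂ →L[ℂ] ℂ :=
  SchwartzMap.mkCLMtoNormedSpace (σ := RingHom.id ℂ)
    (fun φ => ∑' m : ℤ, (combCoeff p q m : ℂ) * φ m)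
    (by
      intro φ ψ
      rw [← (summable_mul_schwartz_int (abs_combCoeff_le p q) φ).tsum_add
        (summable_mul_schwartz_int (abs_combCoeff_le p q) ψ)]
      exact tsum_congr fun m => by simp [mul_add])
    (by
      intro a φ
      rw [RingHom.id_apply, smul_eq_mul, ← tsum_mul_left]
      exact tsum_congr fun m => by simp only [smul_apply, smul_eq_mul]; ring)
    (by
      set C := (p + q) ^ 2 / 4 + (p - q) ^ 2 / 4 with hC
      have hC0 : 0 ≤ C := by positivity
      refine ⟨Finset.Iic (2, 0), C * ((∑' m : ℤ, ((1 + |(m : ℝ)|) ^ 2)⁻¹) * 4),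
        mul_nonneg hC0 (mul_nonneg (tsum_nonneg fun m => by positivity) (by norm_num)), ?_⟩
      intro φ
      have h := (summable_inv_one_add_sq.mul_right
        (4 * (Finset.Iic (2, 0)).sup (schwartzSeminormFamily ℂ ℝ ℂ) φ)).mul_left C
      refine (tsum_of_norm_bounded h.hasSum fun m => ?_).trans (le_of_eq ?_)
      · rw [norm_mul, Complex.norm_real, Real.norm_eq_abs]
        exact mul_le_mul (abs_combCoeff_le p q m) (norm_schwartz_int_le φ m) (norm_nonneg _) hC0
      · rw [tsum_mul_left, tsum_mul_right]; ring)

lemma combAutocorrelation_apply (p q : ℝ) (φ : SchwartzMap ℝ ℂ) :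
    combAutocorrelation p q φ = ∑' m : ℤ, (combCoeff p q m : ℂ) * φ m := rfl

lemma fourier_one_half (m : ℤ) :
    fourier m (((1 / 2 : ℝ) : ℝ) : UnitAddCircle) = (intSign m : ℂ) := by
  rw [fourier_coe_apply]
  have : 2 * (Real.pi : ℂ) * Complex.I * m * ((1 / 2 : ℝ) : ℂ) / ((1 : ℝ) : ℂ)
      = m * (Real.pi * Complex.I) := by push_cast; ring
  rw [this, Complex.exp_int_mul, Complex.exp_pi_mul_I]
  unfold intSign
  split_ifs with h
  · rw [h.neg_one_zpow]; simp
  · rw [(Int.not_even_iff_odd.1 h).neg_one_zpow]; simp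

/-- For `p, q ∈ [0,1]`, the deterministic weighted Dirac comb on `ℤ ⊂ ℝ` with
weight `p` at even and `q` at odd integers has a natural autocorrelation `γ_{ω_a}` (a tempered
distribution `T` such that `(1/(2r)) Σ_{x,y∈ℤ∩[−r,r]} c(x)c(y)φ(x−y) → T(φ)` for all Schwartz
`φ`), whose Fourier transform is
`γ̂_{ω_a} = ((p+q)²/4)·Σ_{y∈ℤ} δ_y + ((p−q)²/4)·Σ_{y∈ℤ+1/2} δ_y`. -/
theorem weighted_integer_comb_diffraction
    (p q : ℝ) (hp : p ∈ Set.Icc (0 : ℝ) 1) (hq : q ∈ Set.Icc (0 : ℝ) 1) :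
    ∃ T : SchwartzMap ℝ ℂ →L[ℂ] ℂ,
      (∀ φ : SchwartzMap ℝ ℂ,
        Tendsto
          (fun r : ℝ =>
            ((1 / (2 * r) : ℝ) : ℂ) *
              ∑ x ∈ Finset.Icc (-⌊r⌋) ⌊r⌋, ∑ y ∈ Finset.Icc (-⌊r⌋) ⌊r⌋,
                (((if Even x then p else q) * (if Even y then p else q) : ℝ) : ℂ) *
                  φ ((x : ℝ) - (y : ℝ)))
          atTop (𝓝 (T φ))) ∧
      (∀ φ : SchwartzMap ℝ ℂ,
        T (SchwartzMap.fourierTransformCLM ℂ φ) =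
          (((p + q) ^ 2 / 4 : ℝ) : ℂ) * ∑' y : ℤ, φ (y : ℝ) +
            (((p - q) ^ 2 / 4 : ℝ) : ℂ) * ∑' y : ℤ, φ ((y : ℝ) + 1 / 2)) := by
  refine ⟨combAutocorrelation p q, fun φ => ?_, fun φ => ?_⟩
  · have hEq : ∀ r : ℝ, ((1 / (2 * r) : ℝ) : ℂ) *
        ∑ x ∈ Finset.Icc (-⌊r⌋) ⌊r⌋, ∑ y ∈ Finset.Icc (-⌊r⌋) ⌊r⌋,
          (((if Even x then p else q) * (if Even y then p else q) : ℝ) : ℂ) *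
            φ ((x : ℝ) - (y : ℝ))
        = ∑' m : ℤ, ((1 / (2 * r) * combPairSum p q ⌊r⌋ m : ℝ) : ℂ) * φ m := by
      intro r
      have h := comb_double_sum p q ⌊r⌋ (fun m : ℤ => φ (m : ℝ))
      simp only [combWeight, Int.cast_sub] at h
      rw [h, ← tsum_mul_left]
      exact tsum_congr fun m => by push_cast; ring
    simp_rw [hEq, combAutocorrelation_apply]
    refine tendsto_tsum_of_dominated_convergence
      ((summable_norm_schwartz_int φ).mul_left 2) (fun m => ?_) ?_
    · exact ((Complex.continuous_ofReal.tendsto _).comp (tendsto_combPairSum p q m)).mul_const _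
    · filter_upwards [eventually_ge_atTop 1] with r hr m
      rw [norm_mul, Complex.norm_real, Real.norm_eq_abs]
      exact mul_le_mul_of_nonneg_right (abs_combPairSum_le hp hq hr m) (norm_nonneg _)
  · set ψ := SchwartzMap.fourierTransformCLM ℂ φ with hψ
    have h0 : ∑' y : ℤ, φ (y : ℝ) = ∑' m : ℤ, ψ m := by
      have h := SchwartzMap.tsum_eq_tsum_fourier φ 0
      simpa [hψ] using h
    have h1 : ∑' y : ℤ, φ ((y : ℝ) + 1 / 2) = ∑' m : ℤ, (intSign m : ℂ) * ψ m := by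
      have h := SchwartzMap.tsum_eq_tsum_fourier φ (1 / 2)
      simp_rw [fourier_one_half] at h
      simp_rw [add_comm _ (1 / 2 : ℝ), h]
      exact tsum_congr fun m => mul_comm _ _
    have hs : Summable fun m : ℤ => ψ (m : ℝ) := (summable_norm_schwartz_int ψ).of_norm
    have hs' : Summable fun m : ℤ => (intSign m : ℂ) * ψ m :=
      summable_mul_schwartz_int (fun m => (abs_intSign m).le) ψ
    rw [combAutocorrelation_apply, h0, h1, ← tsum_mul_left, ← tsum_mul_left,
      ← (hs.mul_left _).tsum_add (hs'.mul_left _)]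
    refine tsum_congr fun m => ?_
    unfold combCoeff
    push_cast
    ring
end

section
/- Let Λ ⊂ ℝⁿ be a point set of finite local complexity, let (η(x))_{x∈Λ} be random variables such that for every z ∈ Δ = Λ−Λ the coefficient ν_s(z) = lim_{r→∞} (1/vol(B_r(0))) Σ_{x, x−z ∈ Λ∩B_r(0)} η(x)η(x−z) exists almost surely, and assume the η(x) are uniformly bounded. Then, almost surely, for every Schwartz function φ the limit (γ_{ω_s}, φ) = lim_{r→∞} (1/vol(B_r(0))) Σ_{x,y∈Λ∩B_r(0)} η(x)η(y) φ(x−y) exists and equals Σ_{z∈Δ} ν_s(z) φ(z); that is, γ_{ω_s} = Σ_{z∈Δ} ν_s(z) δ_z defines a tempered distribution which is the natural autocorrelation of ω_s = Σ_{x∈Λ} η(x)δ_x. -/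
/-!
Write `a_r(z) = (1/vol B_r) Σ_{x, x-z ∈ Λ∩B_r} η(x) η(x-z)`, so that the averaged double sum over
`Λ ∩ B_r` is `Σ_{z∈Δ} a_r(z) φ(z)`, and `a_r(z) → ν_s(z)` for all `z ∈ Δ` at once, almost surely,
because the discrete set `Δ` is countable. What has to be justified is the interchange of the limit
with the sum over `Δ`. A uniform bound on `a_r(z)` is not enough: `Δ` is discrete but need not be
uniformly discrete, so it may have too many points for `Σ_{z∈Δ} |φ(z)|` to converge.

The right bound is a weighted `ℓ¹` bound. With `w(z) = (1 + ‖z‖)^{-(n+1)}`,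
`Σ_z |a_r(z)| w(z) ≤ (c²/vol B_r) Σ_{x ∈ Λ∩B_r} Σ_{y ∈ Λ} w(x-y)`,
where the inner sum is over the uniformly discrete set `x - Λ`, hence bounded by a multiple of
`∫ w` (`packing`, `exists_weight_bound`), and `#(Λ∩B_r) = O(vol B_r)` (`exists_count_bound`). So
`Σ_z |a_r(z)| w(z) ≤ C` uniformly in `r` (`coeff_bound`), and the bound passes to `ν_s`. A Schwartz
function is `o(w)` at infinity, so the tails are uniformly small and the limit is termwise
(`tendsto_tsum_of_weighted_bound`); it is also bounded by a Schwartz seminorm times `w`, so the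
limit functional is continuous.
-/

open MeasureTheory Filter Topology ProbabilityTheory
open scoped Pointwise

/-! ### Packing estimates for separated sets -/

/-- Comparison of a sum over a `2δ`-separated finite set with an integral: if `w p` is at most the
values of `g` on the ball of radius `δ` around `p`, the balls being disjoint gives
`(Σ w p) · vol B_δ ≤ ∫ g`. -/
lemma packing {n : ℕ} (F : Finset (EuclideanSpace ℝ (Fin n))) {δ : ℝ}
    (hsep : ∀ p ∈ F, ∀ q ∈ F, p ≠ q → 2 * δ ≤ ‖p - q‖)
    (w g : EuclideanSpace ℝ (Fin n) → ℝ) (hg : Integrable g) (hg0 : ∀ u, 0 ≤ g u)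
    (hw : ∀ p ∈ F, ∀ u ∈ Metric.ball p δ, w p ≤ g u) :
    (∑ p ∈ F, w p) * volume.real (Metric.ball (0 : EuclideanSpace ℝ (Fin n)) δ) ≤ ∫ u, g u := by
  have hdisj : (F : Set (EuclideanSpace ℝ (Fin n))).Pairwise
      (Function.onFun Disjoint fun p => Metric.ball p δ) := by
    intro p hp q hq hpq
    apply Metric.ball_disjoint_ball
    rw [dist_eq_norm]
    linarith [hsep p hp q hq hpq]
  calc (∑ p ∈ F, w p) * volume.real (Metric.ball (0 : EuclideanSpace ℝ (Fin n)) δ)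
      = ∑ p ∈ F, volume.real (Metric.ball p δ) • w p := by
        rw [Finset.sum_mul]
        refine Finset.sum_congr rfl fun p _ => ?_
        rw [Measure.addHaar_real_ball_center volume p, smul_eq_mul, mul_comm]
    _ ≤ ∑ p ∈ F, ∫ u in Metric.ball p δ, g u := by
        refine Finset.sum_le_sum fun p hp => ?_
        exact setIntegral_ge_of_const_le measurableSet_ball measure_ball_lt_top.ne (hw p hp)
          hg.integrableOn
    _ = ∫ u in ⋃ p ∈ F, Metric.ball p δ, g u :=
        (integral_biUnion_finset F (fun _ _ => measurableSet_ball) hdisj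
          fun _ _ => hg.integrableOn).symm
    _ ≤ ∫ u, g u := setIntegral_le_integral hg (Eventually.of_forall hg0)

/-- The integrable weight `(1 + ‖z‖)^{-(n+1)}` on `ℝⁿ`. -/
noncomputable def wt {n : ℕ} (z : EuclideanSpace ℝ (Fin n)) : ℝ := ((1 + ‖z‖) ^ (n + 1))⁻¹

lemma wt_pos {n : ℕ} (z : EuclideanSpace ℝ (Fin n)) : 0 < wt z := by
  unfold wt; positivity

lemma integrable_wt (n : ℕ) : Integrable (wt : EuclideanSpace ℝ (Fin n) → ℝ) := by
  have h := integrable_one_add_norm (E := EuclideanSpace ℝ (Fin n)) (μ := volume)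
    (r := ((n + 1 : ℕ) : ℝ)) (by simp)
  refine h.congr (Eventually.of_forall fun z => ?_)
  have : 0 ≤ 1 + ‖z‖ := by positivity
  simp only [wt]
  rw [Real.rpow_neg this, Real.rpow_natCast]

lemma exists_weight_bound (n : ℕ) {δ : ℝ} (hδ : 0 < δ) (hδ1 : δ ≤ 1) :
    ∃ K : ℝ, 0 ≤ K ∧ ∀ F : Finset (EuclideanSpace ℝ (Fin n)),
      (∀ p ∈ F, ∀ q ∈ F, p ≠ q → 2 * δ ≤ ‖p - q‖) → ∑ p ∈ F, wt p ≤ K := by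
  have hV : 0 < volume.real (Metric.ball (0 : EuclideanSpace ℝ (Fin n)) δ) :=
    ENNReal.toReal_pos (Metric.measure_ball_pos _ _ hδ).ne' measure_ball_lt_top.ne
  have hI : 0 ≤ ∫ u : EuclideanSpace ℝ (Fin n), 2 ^ (n + 1) * wt u :=
    integral_nonneg fun u => by have := wt_pos u; positivity
  refine ⟨(∫ u : EuclideanSpace ℝ (Fin n), 2 ^ (n + 1) * wt u) /
    volume.real (Metric.ball (0 : EuclideanSpace ℝ (Fin n)) δ), by positivity, fun F hF => ?_⟩
  rw [le_div_iff₀ hV]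
  refine packing F hF wt _ ((integrable_wt n).const_mul _)
    (fun u => by have := wt_pos u; positivity) fun p _ u hu => ?_
  have hu' : ‖u‖ ≤ ‖p‖ + 1 := by
    rw [mem_ball_iff_norm] at hu
    have := norm_add_le (u - p) p
    rw [sub_add_cancel] at this
    linarith
  unfold wt
  rw [← div_eq_mul_inv, le_div_iff₀ (by positivity), inv_mul_le_iff₀ (by positivity), mul_comm,
    ← mul_pow]
  gcongr
  linarith [norm_nonneg p]

lemma exists_count_bound (n : ℕ) {δ : ℝ} (hδ : 0 < δ) (hδ1 : δ ≤ 1) :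
    ∃ K : ℝ, 0 ≤ K ∧ ∀ r : ℝ, 1 ≤ r → ∀ F : Finset (EuclideanSpace ℝ (Fin n)),
      (∀ p ∈ F, ∀ q ∈ F, p ≠ q → 2 * δ ≤ ‖p - q‖) →
      (∀ p ∈ F, ‖p‖ ≤ r) →
      (F.card : ℝ) ≤ K * volume.real (Metric.closedBall (0 : EuclideanSpace ℝ (Fin n)) r) := by
  have hV : 0 < volume.real (Metric.ball (0 : EuclideanSpace ℝ (Fin n)) δ) :=
    ENNReal.toReal_pos (Metric.measure_ball_pos _ _ hδ).ne' measure_ball_lt_top.ne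
  refine ⟨2 ^ n / volume.real (Metric.ball (0 : EuclideanSpace ℝ (Fin n)) δ), by positivity,
    fun r hr F hF hFr => ?_⟩
  have h := packing F hF (fun _ => 1)
    ((Metric.closedBall (0 : EuclideanSpace ℝ (Fin n)) (2 * r)).indicator fun _ => (1 : ℝ))
    ((integrable_indicator_iff measurableSet_closedBall).2
      (integrableOn_const measure_closedBall_lt_top.ne))
    (fun u => Set.indicator_nonneg (fun _ _ => zero_le_one) u)
    (fun p hp u hu => by
      rw [Set.indicator_of_mem]
      rw [mem_ball_iff_norm] at hu
      rw [mem_closedBall_zero_iff]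
      have := norm_add_le (u - p) p
      rw [sub_add_cancel] at this
      linarith [hFr p hp])
  rw [integral_indicator measurableSet_closedBall] at h
  simp only [Finset.sum_const, nsmul_eq_mul, mul_one, integral_const, smul_eq_mul,
    MeasurableSet.univ, measureReal_restrict_apply, Set.univ_inter] at h
  rw [Measure.addHaar_real_closedBall _ _ (by linarith)] at h
  rw [Measure.addHaar_real_closedBall _ _ (by linarith), div_mul_eq_mul_div, le_div_iff₀ hV]
  refine h.trans (le_of_eq ?_)
  simp only [finrank_euclideanSpace, Fintype.card_fin]
  ring

/-! ### Limits of weighted sums -/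

/-- Termwise passage to the limit in `Σ a_r f` when the `a_r` are bounded in the weighted `ℓ¹` norm
with weight `w` and `f = o(w)` along the cofinite filter. -/
lemma tendsto_tsum_of_weighted_bound {ι : Type*} {l : Filter ℝ} [l.NeBot] (a : ℝ → ι → ℝ)
    (ν w : ι → ℝ) (hw : ∀ z, 0 ≤ w z) (C : ℝ)
    (hC : ∀ᶠ r in l, ∀ G : Finset ι, ∑ z ∈ G, |a r z| * w z ≤ C)
    (hν : ∀ G : Finset ι, ∑ z ∈ G, |ν z| * w z ≤ C)
    (ha : ∀ z, Tendsto (fun r => a r z) l (𝓝 (ν z)))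
    (f : ι → ℂ) (M : ℝ) (hM : ∀ z, ‖f z‖ ≤ M * w z)
    (hf : ∀ ε > 0, ∃ A : Finset ι, ∀ z ∉ A, ‖f z‖ ≤ ε * w z) :
    Tendsto (fun r => ∑' z, (a r z : ℂ) * f z) l (𝓝 (∑' z, (ν z : ℂ) * f z)) := by
  classical
  have hC0 : 0 ≤ C := by simpa using hν ∅
  have key : ∀ b : ι → ℝ, (∀ G : Finset ι, ∑ z ∈ G, |b z| * w z ≤ C) →
      Summable (fun z => (b z : ℂ) * f z) := by
    intro b hb
    have h1 : Summable fun z => |b z| * w z :=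
      summable_of_sum_le (fun z => mul_nonneg (abs_nonneg _) (hw z)) hb
    refine Summable.of_norm_bounded (h1.mul_left M) fun z => ?_
    rw [norm_mul, Complex.norm_real, Real.norm_eq_abs]
    calc |b z| * ‖f z‖ ≤ |b z| * (M * w z) := by gcongr; exact hM z
      _ = _ := by ring
  rw [Metric.tendsto_nhds]
  intro ε hε
  obtain ⟨A, hA⟩ := hf (ε / (4 * (C + 1))) (by positivity)
  have hfin : Tendsto (fun r => ∑ z ∈ A, ((a r z : ℂ) * f z)) l
      (𝓝 (∑ z ∈ A, ((ν z : ℂ) * f z))) := by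
    refine tendsto_finsetSum _ fun z _ => ?_
    exact ((Complex.continuous_ofReal.tendsto _).comp (ha z)).mul_const _
  have htail : ∀ b : ι → ℝ, (∀ G : Finset ι, ∑ z ∈ G, |b z| * w z ≤ C) →
      dist (∑' z, (b z : ℂ) * f z) (∑ z ∈ A, (b z : ℂ) * f z) ≤ ε / 4 := by
    intro b hb
    refine le_of_tendsto (((key b hb).hasSum).dist tendsto_const_nhds) ?_
    filter_upwards [eventually_ge_atTop A] with B hB
    rw [dist_eq_norm, ← Finset.sum_sdiff hB, add_sub_cancel_right]
    calc ‖∑ z ∈ B \ A, (b z : ℂ) * f z‖ ≤ ∑ z ∈ B \ A, ε / (4 * (C + 1)) * (|b z| * w z) := by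
          refine norm_sum_le_of_le _ fun z hz => ?_
          rw [norm_mul, Complex.norm_real, Real.norm_eq_abs]
          calc |b z| * ‖f z‖ ≤ |b z| * (ε / (4 * (C + 1)) * w z) := by
                gcongr; exact hA z (Finset.mem_sdiff.1 hz).2
            _ = _ := by ring
      _ ≤ ε / (4 * (C + 1)) * C := by
          rw [← Finset.mul_sum]
          exact mul_le_mul_of_nonneg_left (hb _) (by positivity)
      _ ≤ ε / 4 := by
          rw [div_mul_eq_mul_div, div_le_div_iff₀ (by positivity) (by positivity)]
          nlinarith
  filter_upwards [hC, Metric.tendsto_nhds.1 hfin (ε / 4) (by positivity)] with r hr hr'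
  have h1 := htail (a r) hr
  have h2 := htail ν hν
  rw [dist_comm] at h2
  linarith [dist_triangle4 (∑' z, (a r z : ℂ) * f z) (∑ z ∈ A, (a r z : ℂ) * f z)
    (∑ z ∈ A, (ν z : ℂ) * f z) (∑' z, (ν z : ℂ) * f z)]

/-! ### The coefficients of finite patches -/

/-- The weighted `ℓ¹` norm of the unnormalised coefficients `Σ_{x, x-z ∈ F} h(x) h(x-z)` is at most
`c² K #F`, where `K` bounds the sum of the weight over separated sets: for fixed `x` the `z` with
`x - z ∈ F` form a separated set. -/
lemma coeff_bound {n : ℕ} {δ K c : ℝ}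
    (hK : ∀ F : Finset (EuclideanSpace ℝ (Fin n)),
      (∀ p ∈ F, ∀ q ∈ F, p ≠ q → 2 * δ ≤ ‖p - q‖) → ∑ p ∈ F, wt p ≤ K)
    (F : Finset (EuclideanSpace ℝ (Fin n)))
    (hF : ∀ p ∈ F, ∀ q ∈ F, p ≠ q → 2 * δ ≤ ‖p - q‖)
    (h : EuclideanSpace ℝ (Fin n) → ℝ) (hc : ∀ x ∈ F, |h x| ≤ c)
    (G : Finset (EuclideanSpace ℝ (Fin n))) :
    ∑ z ∈ G, |∑ x ∈ F with x - z ∈ F, h x * h (x - z)| * wt z ≤ c ^ 2 * K * F.card := by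
  calc ∑ z ∈ G, |∑ x ∈ F with x - z ∈ F, h x * h (x - z)| * wt z
      ≤ ∑ z ∈ G, ∑ x ∈ F with x - z ∈ F, c ^ 2 * wt z := by
        refine Finset.sum_le_sum fun z _ => ?_
        rw [← Finset.sum_mul]
        refine mul_le_mul_of_nonneg_right ?_ (wt_pos z).le
        refine (Finset.abs_sum_le_sum_abs _ _).trans (Finset.sum_le_sum fun x hx => ?_)
        rw [Finset.mem_filter] at hx
        rw [abs_mul, sq]
        exact mul_le_mul (hc x hx.1) (hc _ hx.2) (abs_nonneg _)
          ((abs_nonneg _).trans (hc x hx.1))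
    _ = ∑ x ∈ F, ∑ z ∈ G with x - z ∈ F, c ^ 2 * wt z := by
        simp only [Finset.sum_filter]
        exact Finset.sum_comm
    _ ≤ ∑ x ∈ F, c ^ 2 * K := by
        refine Finset.sum_le_sum fun x _ => ?_
        rw [← Finset.mul_sum]
        refine mul_le_mul_of_nonneg_left (hK _ fun p hp q hq hpq => ?_) (sq_nonneg c)
        rw [Finset.mem_filter] at hp hq
        have := hF _ hq.2 _ hp.2 fun e => hpq (sub_right_injective e).symm
        rwa [sub_sub_sub_cancel_left] at this
    _ = c ^ 2 * K * F.card := by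
        rw [Finset.sum_const, nsmul_eq_mul, mul_comm]

/-- Sorting the pairs `(x, y)` by their difference `z = x - y`. -/
lemma sum_sum_eq_sum_diff {n : ℕ} (F D : Finset (EuclideanSpace ℝ (Fin n)))
    (hD : ∀ x ∈ F, ∀ y ∈ F, x - y ∈ D)
    (h : EuclideanSpace ℝ (Fin n) → ℝ) (f : EuclideanSpace ℝ (Fin n) → ℂ) :
    ∑ x ∈ F, ∑ y ∈ F, ((h x * h y : ℝ) : ℂ) * f (x - y) =
      ∑ z ∈ D, ((∑ x ∈ F with x - z ∈ F, h x * h (x - z) : ℝ) : ℂ) * f z := by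
  simp only [Complex.ofReal_sum, Finset.sum_mul]
  simp only [Finset.sum_filter]
  conv_rhs => rw [Finset.sum_comm]
  refine Finset.sum_congr rfl fun x hx => ?_
  rw [← Finset.sum_subset (s₁ := F.image fun y => x - y) (s₂ := D)]
  · rw [Finset.sum_image fun _ _ _ _ e => sub_right_injective e]
    refine Finset.sum_congr rfl fun y hy => ?_
    rw [sub_sub_cancel, if_pos hy]
  · intro z hz
    obtain ⟨y, hy, rfl⟩ := Finset.mem_image.1 hz
    exact hD x hx y hy
  · intro z _ hz
    rw [if_neg fun hxz => hz (Finset.mem_image.2 ⟨x - z, hxz, sub_sub_cancel _ _⟩)]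

/-! ### Separation and local finiteness from the difference set -/

lemma exists_separation {n : ℕ} (Λ : Set (EuclideanSpace ℝ (Fin n)))
    (hd : IsDiscrete (Λ - Λ)) :
    ∃ δ : ℝ, 0 < δ ∧ δ ≤ 1 ∧ ∀ p ∈ Λ, ∀ q ∈ Λ, p ≠ q → 2 * δ ≤ ‖p - q‖ := by
  rcases Λ.eq_empty_or_nonempty with rfl | ⟨x₀, hx₀⟩
  · exact ⟨1, one_pos, le_rfl, by simp⟩
  have h0 : (0 : EuclideanSpace ℝ (Fin n)) ∈ Λ - Λ := ⟨x₀, hx₀, x₀, hx₀, sub_self _⟩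
  obtain ⟨ε, hε, hball⟩ := Metric.exists_ball_inter_eq_singleton_of_mem_discrete hd h0
  refine ⟨min (ε / 2) 1, by positivity, min_le_right _ _, fun p hp q hq hpq => ?_⟩
  have : ε ≤ ‖p - q‖ := by
    by_contra! hlt
    have hmem : p - q ∈ Metric.ball (0 : EuclideanSpace ℝ (Fin n)) ε ∩ (Λ - Λ) :=
      ⟨by simpa using hlt, Set.sub_mem_sub hp hq⟩
    rw [hball, Set.mem_singleton_iff, sub_eq_zero] at hmem
    exact hpq hmem
  linarith [min_le_left (ε / 2) 1]

lemma finite_inter_closedBall {n : ℕ} (Λ : Set (EuclideanSpace ℝ (Fin n)))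
    (hd : IsDiscrete (Λ - Λ)) (hc : IsClosed (Λ - Λ)) (r : ℝ) :
    (Λ ∩ Metric.closedBall 0 r).Finite := by
  rcases Λ.eq_empty_or_nonempty with rfl | ⟨x₀, hx₀⟩
  · simp
  have hfin := Metric.finite_isBounded_inter_isClosed hd
    (Metric.isBounded_closedBall (x := (0 : EuclideanSpace ℝ (Fin n))) (r := r + ‖x₀‖)) hc
  refine Set.Finite.of_finite_image (f := fun x => x - x₀) (hfin.subset ?_)
    (sub_left_injective.injOn)
  rintro _ ⟨x, ⟨hx, hxr⟩, rfl⟩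
  rw [mem_closedBall_zero_iff] at hxr
  refine ⟨?_, Set.sub_mem_sub hx hx₀⟩
  rw [mem_closedBall_zero_iff]
  exact (norm_sub_le _ _).trans (by gcongr)

/-! ### Decay of Schwartz functions -/

/-- The constant, a multiple of a Schwartz seminorm of `φ`, with `(1 + ‖z‖)^{n+2} ‖φ z‖ ≤ decayConst φ`. -/
noncomputable def decayConst {n : ℕ} (φ : SchwartzMap (EuclideanSpace ℝ (Fin n)) ℂ) : ℝ :=
  2 ^ (n + 2) * ((Finset.Iic (n + 2, 0)).sup
    (schwartzSeminormFamily ℂ (EuclideanSpace ℝ (Fin n)) ℂ)) φ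

lemma schwartz_decay {n : ℕ} (φ : SchwartzMap (EuclideanSpace ℝ (Fin n)) ℂ)
    (z : EuclideanSpace ℝ (Fin n)) : (1 + ‖z‖) * ‖φ z‖ ≤ decayConst φ * wt z := by
  have h := SchwartzMap.one_add_le_sup_seminorm_apply (𝕜 := ℂ) (m := (n + 2, 0)) le_rfl le_rfl φ z
  rw [norm_iteratedFDeriv_zero] at h
  unfold wt
  rw [← div_eq_mul_inv, le_div_iff₀ (by positivity)]
  refine le_trans (le_of_eq ?_) h
  ring

lemma decayConst_nonneg {n : ℕ} (φ : SchwartzMap (EuclideanSpace ℝ (Fin n)) ℂ) :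
    0 ≤ decayConst φ := by
  unfold decayConst; positivity

lemma schwartz_le {n : ℕ} (φ : SchwartzMap (EuclideanSpace ℝ (Fin n)) ℂ)
    (z : EuclideanSpace ℝ (Fin n)) : ‖φ z‖ ≤ decayConst φ * wt z := by
  have := schwartz_decay φ z
  nlinarith [norm_nonneg z, norm_nonneg (φ z), mul_nonneg (norm_nonneg z) (norm_nonneg (φ z))]

/-! ### The autocorrelation -/

/-- Let `Λ ⊂ ℝⁿ` have finite local complexity (`Δ = Λ−Λ` closed and discrete),
let `(η(x))_{x∈Λ}` be uniformly bounded random variables such that for every `z ∈ Δ` the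
coefficient `ν_s(z) = lim (1/vol B_r) Σ_{x,x−z∈Λ∩B_r} η(x)η(x−z)` exists almost surely. Then,
almost surely, for every Schwartz `φ` the limit
`(1/vol B_r) Σ_{x,y∈Λ∩B_r} η(x)η(y)φ(x−y)` exists and equals `Σ_{z∈Δ} ν_s(z)φ(z)`; i.e.
`γ_{ω_s} = Σ_{z∈Δ} ν_s(z)δ_z` defines a tempered distribution which is the natural
autocorrelation of `ω_s = Σ_{x∈Λ} η(x)δ_x`. -/
theorem autocorrelation_from_coefficients
    (n : ℕ) (Λ : Set (EuclideanSpace ℝ (Fin n)))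
    (hclosed : IsClosed (Λ - Λ))
    (hdiscrete : DiscreteTopology ↥(Λ - Λ))
    (Ω : Type*) [MeasureSpace Ω] [IsProbabilityMeasure (ℙ : Measure Ω)]
    (η : EuclideanSpace ℝ (Fin n) → Ω → ℝ)
    (hmeas : ∀ x, Measurable (η x))
    (c : ℝ) (hbdd : ∀ x ∈ Λ, ∀ ω : Ω, |η x ω| ≤ c)
    (νs : EuclideanSpace ℝ (Fin n) → Ω → ℝ)
    (hνs : ∀ z ∈ Λ - Λ, ∀ᵐ ω : Ω, Tendsto
      (fun r : ℝ =>
        (∑' x : ↥{x : EuclideanSpace ℝ (Fin n) |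
            x ∈ Λ ∩ Metric.closedBall 0 r ∧ x - z ∈ Λ ∩ Metric.closedBall 0 r},
          η (x : EuclideanSpace ℝ (Fin n)) ω * η ((x : EuclideanSpace ℝ (Fin n)) - z) ω) /
          (volume (Metric.closedBall (0 : EuclideanSpace ℝ (Fin n)) r)).toReal)
      atTop (𝓝 (νs z ω))) :
    ∀ᵐ ω : Ω, ∃ T : SchwartzMap (EuclideanSpace ℝ (Fin n)) ℂ →L[ℂ] ℂ,
      ∀ φ : SchwartzMap (EuclideanSpace ℝ (Fin n)) ℂ,
        T φ = (∑' z : ↥(Λ - Λ),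
            ((νs (z : EuclideanSpace ℝ (Fin n)) ω : ℝ) : ℂ) * φ (z : EuclideanSpace ℝ (Fin n))) ∧
        Tendsto
          (fun r : ℝ =>
            ((1 / (volume (Metric.closedBall (0 : EuclideanSpace ℝ (Fin n)) r)).toReal : ℝ) : ℂ) *
              ∑' x : ↥(Λ ∩ Metric.closedBall 0 r), ∑' y : ↥(Λ ∩ Metric.closedBall 0 r),
                ((η (x : EuclideanSpace ℝ (Fin n)) ω * η (y : EuclideanSpace ℝ (Fin n)) ω : ℝ) : ℂ) *
                  φ ((x : EuclideanSpace ℝ (Fin n)) - (y : EuclideanSpace ℝ (Fin n))))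
          atTop (𝓝 (T φ)) := by
  have hd : IsDiscrete (Λ - Λ) := ⟨hdiscrete⟩
  obtain ⟨δ, hδ, hδ1, hsep⟩ := exists_separation Λ hd
  obtain ⟨K, hK0, hK⟩ := exists_weight_bound n hδ hδ1
  obtain ⟨N, hN0, hN⟩ := exists_count_bound n hδ hδ1
  have hcount : Countable ↥(Λ - Λ) := countable_of_Lindelof_of_discrete
  have hae : ∀ᵐ ω : Ω, ∀ z : ↥(Λ - Λ), _ := ae_all_iff.2 fun z : ↥(Λ - Λ) => hνs z z.2
  filter_upwards [hae] with ω hω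
  let F : ℝ → Finset (EuclideanSpace ℝ (Fin n)) := fun r =>
    (finite_inter_closedBall Λ hd hclosed r).toFinset
  have hF : ∀ r, Λ ∩ Metric.closedBall 0 r = ↑(F r) := fun r => by simp [F]
  have hFmem : ∀ r x, x ∈ F r ↔ x ∈ Λ ∩ Metric.closedBall 0 r := fun r x => by simp [F]
  let a : ℝ → ↥(Λ - Λ) → ℝ := fun r z =>
    (∑ x ∈ F r with x - (z : EuclideanSpace ℝ (Fin n)) ∈ F r, η x ω * η (x - z) ω) /
      volume.real (Metric.closedBall (0 : EuclideanSpace ℝ (Fin n)) r)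
  have ha : ∀ z, Tendsto (fun r => a r z) atTop (𝓝 (νs z ω)) := by
    intro z
    refine (hω z).congr fun r => ?_
    have hset : {x : EuclideanSpace ℝ (Fin n) | x ∈ Λ ∩ Metric.closedBall 0 r ∧
        x - (z : EuclideanSpace ℝ (Fin n)) ∈ Λ ∩ Metric.closedBall 0 r} =
        ↑((F r).filter fun x => x - (z : EuclideanSpace ℝ (Fin n)) ∈ F r) := by
      ext x
      rw [Finset.mem_coe, Finset.mem_filter, hFmem, hFmem]
      rfl
    rw [tsum_congr_set_coe (fun x => η x ω * η (x - z) ω) hset, Finset.tsum_subtype' _ fun x => η x ω * η (x - z) ω]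
    rfl
  set C := c ^ 2 * K * N with hCdef
  have haC : ∀ᶠ r in atTop, ∀ G : Finset ↥(Λ - Λ), ∑ z ∈ G, |a r z| * wt z.1 ≤ C := by
    filter_upwards [eventually_ge_atTop 1] with r hr G
    have hV : 0 < volume.real (Metric.closedBall (0 : EuclideanSpace ℝ (Fin n)) r) :=
      ENNReal.toReal_pos (Metric.measure_closedBall_pos _ _ (by linarith)).ne'
        measure_closedBall_lt_top.ne
    have hFsep : ∀ p ∈ F r, ∀ q ∈ F r, p ≠ q → 2 * δ ≤ ‖p - q‖ := fun p hp q hq =>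
      hsep p ((hFmem r p).1 hp).1 q ((hFmem r q).1 hq).1
    have h1 := coeff_bound hK (F r) hFsep (fun x => η x ω)
      (fun x hx => hbdd x ((hFmem r x).1 hx).1 ω) (G.map (Function.Embedding.subtype _))
    rw [Finset.sum_map] at h1
    have h2 := hN r hr (F r) hFsep fun p hp => mem_closedBall_zero_iff.1 ((hFmem r p).1 hp).2
    have h3 : ∑ z ∈ G, |a r z| * wt z.1 = (∑ z ∈ G,
        |∑ x ∈ F r with x - (z : EuclideanSpace ℝ (Fin n)) ∈ F r, η x ω * η (x - z) ω| * wt z.1) /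
        volume.real (Metric.closedBall (0 : EuclideanSpace ℝ (Fin n)) r) := by
      rw [Finset.sum_div]
      refine Finset.sum_congr rfl fun z _ => ?_
      simp only [a]
      rw [abs_div, abs_of_pos hV, div_mul_eq_mul_div]
    rw [h3, div_le_iff₀ hV]
    refine h1.trans ?_
    rw [hCdef, mul_assoc _ N]
    exact mul_le_mul_of_nonneg_left h2 (by positivity)
  have hνC : ∀ G : Finset ↥(Λ - Λ), ∑ z ∈ G, |νs z ω| * wt z.1 ≤ C := by
    intro G
    refine le_of_tendsto (tendsto_finsetSum G fun z _ => ((ha z).abs.mul_const (wt z.1))) ?_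
    filter_upwards [haC] with r hr using hr G
  have hC0 : 0 ≤ C := by positivity
  have hνsum : Summable fun z : ↥(Λ - Λ) => |νs z ω| * wt z.1 :=
    summable_of_sum_le (fun z => mul_nonneg (abs_nonneg _) (wt_pos _).le) hνC
  have hle : ∀ (φ : SchwartzMap (EuclideanSpace ℝ (Fin n)) ℂ) (z : ↥(Λ - Λ)),
      ‖((νs z ω : ℝ) : ℂ) * φ z‖ ≤ decayConst φ * (|νs z ω| * wt z.1) := by
    intro φ z
    rw [norm_mul, Complex.norm_real, Real.norm_eq_abs]
    calc |νs z ω| * ‖φ z‖ ≤ |νs z ω| * (decayConst φ * wt z.1) := by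
          gcongr; exact schwartz_le φ z
      _ = _ := by ring
  have hsum : ∀ φ : SchwartzMap (EuclideanSpace ℝ (Fin n)) ℂ,
      Summable fun z : ↥(Λ - Λ) => ((νs z ω : ℝ) : ℂ) * φ z := fun φ =>
    Summable.of_norm_bounded (hνsum.mul_left (decayConst φ)) (hle φ)
  let T : SchwartzMap (EuclideanSpace ℝ (Fin n)) ℂ →L[ℂ] ℂ :=
    SchwartzMap.mkCLMtoNormedSpace (fun φ => ∑' z : ↥(Λ - Λ), ((νs z ω : ℝ) : ℂ) * φ z)
      (fun φ ψ => by
        rw [← (hsum φ).tsum_add (hsum ψ)]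
        simp only [add_apply, mul_add])
      (fun b φ => by
        rw [RingHom.id_apply, smul_eq_mul, ← tsum_mul_left]
        refine tsum_congr fun z => ?_
        rw [smul_apply, smul_eq_mul, mul_left_comm])
      (by
        refine ⟨Finset.Iic (n + 2, 0), 2 ^ (n + 2) * C, by positivity, fun φ => ?_⟩
        refine (tsum_of_norm_bounded (hνsum.mul_left (decayConst φ)).hasSum (hle φ)).trans ?_
        rw [tsum_mul_left]
        refine (mul_le_mul_of_nonneg_left (hνsum.tsum_le_of_sum_le hνC)
          (decayConst_nonneg φ)).trans (le_of_eq ?_)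
        unfold decayConst
        ring)
  refine ⟨T, fun φ => ⟨rfl, ?_⟩⟩
  have hlim := tendsto_tsum_of_weighted_bound a (fun z => νs z ω) (fun z => wt z.1)
    (fun z => (wt_pos _).le) C haC hνC ha (fun z => φ z) (decayConst φ)
    (fun z => schwartz_le φ z) (by
      intro ε hε
      -- Outside the ball of radius `decayConst φ / ε` the extra decay factor beats `ε`.
      have hfin := Metric.finite_isBounded_inter_isClosed hd
        (Metric.isBounded_closedBall (x := (0 : EuclideanSpace ℝ (Fin n)))
          (r := decayConst φ / ε)) hclosed
      have hfin' : {z : ↥(Λ - Λ) | ‖z.1‖ ≤ decayConst φ / ε}.Finite := by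
        refine Set.Finite.of_finite_image (f := Subtype.val) (hfin.subset ?_)
          Subtype.val_injective.injOn
        rintro _ ⟨z, hz, rfl⟩
        exact ⟨mem_closedBall_zero_iff.2 hz, z.2⟩
      refine ⟨hfin'.toFinset, fun z hz => ?_⟩
      rw [Set.Finite.mem_toFinset, Set.mem_ofPred_eq, not_le, div_lt_iff₀ hε] at hz
      have h1 := schwartz_decay φ z.1
      have h2 : decayConst φ * wt z.1 ≤ (1 + ‖z.1‖) * (ε * wt z.1) := by
        rw [← mul_assoc]
        exact mul_le_mul_of_nonneg_right (by linarith) (wt_pos _).le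
      exact le_of_mul_le_mul_left (h1.trans h2) (by positivity))
  refine hlim.congr fun r => ?_
  have : DecidablePred (· ∈ Λ - Λ) := Classical.decPred _
  let D : Finset ↥(Λ - Λ) := ((F r ×ˢ F r).image fun p => p.1 - p.2).subtype (· ∈ Λ - Λ)
  have hDmem : ∀ x ∈ F r, ∀ y ∈ F r, x - y ∈ D.map (Function.Embedding.subtype _) := by
    intro x hx y hy
    rw [Finset.mem_map]
    refine ⟨⟨x - y, Set.sub_mem_sub ((hFmem r x).1 hx).1 ((hFmem r y).1 hy).1⟩, ?_, rfl⟩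
    rw [Finset.mem_subtype, Finset.mem_image]
    exact ⟨(x, y), Finset.mem_product.2 ⟨hx, hy⟩, rfl⟩
  have hzero : ∀ z ∉ D, (a r z : ℂ) * φ z = 0 := by
    intro z hz
    have : (F r).filter (fun x => x - (z : EuclideanSpace ℝ (Fin n)) ∈ F r) = ∅ := by
      refine Finset.filter_eq_empty_iff.2 fun x hx hxz => hz ?_
      rw [Finset.mem_subtype, Finset.mem_image]
      exact ⟨(x, x - z), Finset.mem_product.2 ⟨hx, hxz⟩, sub_sub_cancel _ _⟩
    simp only [a, this, Finset.sum_empty, zero_div, Complex.ofReal_zero, zero_mul]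
  rw [tsum_eq_sum hzero, hF r]
  rw [Finset.tsum_subtype' (F r) fun x => ∑' y : ↥(F r : Set (EuclideanSpace ℝ (Fin n))),
    ((η x ω * η y ω : ℝ) : ℂ) * φ (x - y)]
  have hinner : ∀ x, ∑' y : ↥(F r : Set (EuclideanSpace ℝ (Fin n))),
      ((η x ω * η y ω : ℝ) : ℂ) * φ (x - y) = ∑ y ∈ F r, ((η x ω * η y ω : ℝ) : ℂ) * φ (x - y) :=
    fun x => Finset.tsum_subtype' (F r) fun y => ((η x ω * η y ω : ℝ) : ℂ) * φ (x - y)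
  simp only [hinner]
  rw [sum_sum_eq_sum_diff (F r) _ hDmem (fun x => η x ω) φ, Finset.sum_map, Finset.mul_sum]
  refine Finset.sum_congr rfl fun z _ => ?_
  change ((((∑ x ∈ F r with x - (z : EuclideanSpace ℝ (Fin n)) ∈ F r, η x ω * η (x - z) ω) /
      (volume (Metric.closedBall (0 : EuclideanSpace ℝ (Fin n)) r)).toReal : ℝ)) : ℂ) * φ z = _ *
    (((∑ x ∈ F r with x - (z : EuclideanSpace ℝ (Fin n)) ∈ F r, η x ω * η (x - z) ω : ℝ) : ℂ) *
      φ z)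
  rw [Complex.ofReal_div, Complex.ofReal_div, Complex.ofReal_one]
  ring
end
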